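/- Let m ≥ 3 be an integer with an odd factor and let A = [a_1,…,a_m]ᵀ ∈ ℝ^{m×2} satisfy β_A = inf{β_M : M ∈ ℝ^{m×2}} (A is an optimal frame). Then the rows of A form a tight frame, ∑_{j=1}^m a_j a_jᵀ = ((1/2)·∑_{j=1}^m ‖a_j‖₂²)·I₂, and all rows have the same norm: ‖a_1‖₂ = ‖a_2‖₂ = … = ‖a_m‖₂. -/

import Mathlib

noncomputable section

open Real
open scoped RealInnerProductSpace ENNReal

/-- ℝ² as a Euclidean space. -/
abbrev E2 : Type := EuclideanSpace ℝ (Fin 2)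

/-- The vector `(x, y)` in ℝ². -/
def vec2 (x y : ℝ) : E2 := (WithLp.equiv 2 (Fin 2 → ℝ)).symm ![x, y]

/-- The coordinates of a vector in ℝ². -/
def toFun2 (v : E2) : Fin 2 → ℝ := WithLp.equiv 2 (Fin 2 → ℝ) v

/-- The phaseless measurement map `Φ_A(x) = (|⟨a_j, x⟩|)_j`. -/
def PhiMap {m : ℕ} (a : Fin m → E2) (x : E2) : EuclideanSpace ℝ (Fin m) :=
  (WithLp.equiv 2 (Fin m → ℝ)).symm fun j => |⟪a j, x⟫|

/-- The distance `dist(x,y) = min ‖x − y‖ ‖x + y‖` (real phase retrieval distance). -/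
def pdist (x y : E2) : ℝ := min ‖x - y‖ ‖x + y‖

/-- The set of Lipschitz ratios of the phaseless measurement map. -/
def ratioSet {m : ℕ} (a : Fin m → E2) : Set ℝ :=
  {r | ∃ x y : E2, pdist x y ≠ 0 ∧ r = ‖PhiMap a x - PhiMap a y‖ / pdist x y}

/-- The optimal lower Lipschitz constant `L_A`. -/
def lipL {m : ℕ} (a : Fin m → E2) : ℝ := sInf (ratioSet a)

/-- The optimal upper Lipschitz constant `U_A`. -/
def lipU {m : ℕ} (a : Fin m → E2) : ℝ := sSup (ratioSet a)

/-- The condition number `β_A = U_A / L_A`, with `β_A = +∞` when `L_A = 0`. -/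
def condNum {m : ℕ} (a : Fin m → E2) : ℝ≥0∞ :=
  if lipL a = 0 then ⊤ else ENNReal.ofReal (lipU a / lipL a)

/-- An edge family: nonzero vectors with pairwise distinct directions summing to zero
(the edge vectors of a strictly convex polygon). -/
def IsEdgeFamily {m : ℕ} (e : Fin m → E2) : Prop :=
  (∀ j, e j ≠ 0) ∧
  (∀ i j : Fin m, i ≠ j → ‖e i‖⁻¹ • e i ≠ ‖e j‖⁻¹ • e j) ∧
  ∑ j, e j = 0

/-- The diameter-to-perimeter ratio of the polygon with edge vectors `e`. -/
def rRatio {m : ℕ} (e : Fin m → E2) : ℝ :=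
  sSup {s | ∃ u : E2, ‖u‖ = 1 ∧ s = ∑ j, |⟪e j, u⟫|} / (2 * ∑ j, ‖e j‖)

/-- An optimal edge family: minimizes `rRatio` among all edge families of size `m`. -/
def IsOptimalEdgeFamily {m : ℕ} (e : Fin m → E2) : Prop :=
  IsEdgeFamily e ∧ ∀ e' : Fin m → E2, IsEdgeFamily e' → rRatio e ≤ rRatio e'

/-- The complex square map on ℝ² ≅ ℂ: `f(t·(cos φ, sin φ)) = t²·(cos 2φ, sin 2φ)`. -/
def csq (v : E2) : E2 :=
  vec2 (toFun2 v 0 ^ 2 - toFun2 v 1 ^ 2) (2 * toFun2 v 0 * toFun2 v 1)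

/-- The harmonic frame `E_m`: the `j`-th row is `(cos((j−1)π/m), sin((j−1)π/m))`, `j = 1,…,m`. -/
def harmonicFrame (m : ℕ) : Fin m → E2 :=
  fun j => vec2 (Real.cos ((j : ℕ) * π / m)) (Real.sin ((j : ℕ) * π / m))

/-!
Write `z j = csq (a j)`, `T = ∑ ‖a j‖²`, `L = lipL a` and `U = lipU a`. The complex square makes
energies linear: `2 ⟪a, v⟫² = ‖a‖² ‖v‖² + ⟪csq a, csq v⟫`. Testing the Lipschitz ratio with
`x + y` and `x - y` equal, respectively orthogonal, gives
`2 U² ≥ T + ‖∑ z j‖` and `∑ |⟪z j, u⟫| ≤ (T - 2 L²) ‖u‖` for every `u`,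
and both are attained when `∑ z j = 0`.

The second bound says that the zonogon `∑ [-z j, z j]` lies in the disc of radius `D = T - 2 L²`.
Reinhardt's inequality `∑ ‖z j‖ ≤ D m sin (π / (2 m))` then bounds its perimeter: let the unit
vectors `n k` point along the sorted `z k`, so that summation by parts turns
`∑ ⟪V (k + 1) - V k, n k⟫` over the vertices `V k` into `∑ ⟪V (k + 1), n k - n (k + 1)⟫`, which is
at most `D` times a sum of chords of a half-circle, and apply Jensen's inequality to those chords.
Since `∑ ‖z j‖ = T`, this is a lower bound for `U² / L²`. Equality forces `∑ z j = 0`, which is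
tightness, and equal edges `‖z j‖ = ‖a j‖²`.

The odd factor is what makes the bound attained: the `m` equally spaced directions of a half-circle,
which are extremal for Reinhardt's inequality, can then be given signs making them sum to zero.
-/

section Jensen

variable {ι E : Type*} [AddCommGroup E] [Module ℝ E] {K : Set E} {f : E → ℝ} {s : Finset ι}
  {x : ι → E}

theorem sum_le_card_mul_map_mean_of_concaveOn (hf : ConcaveOn ℝ K f) (hx : ∀ i ∈ s, x i ∈ K) :
    ∑ i ∈ s, f (x i) ≤ s.card * f ((s.card : ℝ)⁻¹ • ∑ i ∈ s, x i) := by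
  rcases s.eq_empty_or_nonempty with rfl | hs
  · simp
  have hcard : (0 : ℝ) < s.card := by exact_mod_cast hs.card_pos
  have jensen := hf.le_map_sum (w := fun _ => (s.card : ℝ)⁻¹) (fun _ _ => by positivity)
    (by simp [hcard.ne']) hx
  rwa [← Finset.smul_sum, ← Finset.smul_sum, smul_eq_mul, inv_mul_le_iff₀ hcard] at jensen

theorem eq_mean_of_sum_eq_card_mul_map_mean (hf : StrictConcaveOn ℝ K f) (hx : ∀ i ∈ s, x i ∈ K)
    (h : ∑ i ∈ s, f (x i) = s.card * f ((s.card : ℝ)⁻¹ • ∑ i ∈ s, x i)) :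
    ∀ i ∈ s, x i = (s.card : ℝ)⁻¹ • ∑ i ∈ s, x i := by
  intro i hi
  have hcard : (0 : ℝ) < s.card := by exact_mod_cast Finset.card_pos.2 ⟨i, hi⟩
  have jensen := hf.map_sum_eq_iff (w := fun _ => (s.card : ℝ)⁻¹) (fun _ _ => by positivity)
    (by simp [hcard.ne']) hx
  simp only [← Finset.smul_sum] at jensen
  refine jensen.1 ?_ i hi
  rw [h, smul_eq_mul, inv_mul_cancel_left₀ hcard.ne']

end Jensen

section UnitVector

/-- The point of the unit circle at angle `θ`. -/
def unitVec (θ : ℝ) : E2 := vec2 (cos θ) (sin θ)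

@[simp]
theorem unitVec_apply_zero (θ : ℝ) : unitVec θ 0 = cos θ := rfl

@[simp]
theorem unitVec_apply_one (θ : ℝ) : unitVec θ 1 = sin θ := rfl

theorem inner_eq_coord (v w : E2) : ⟪v, w⟫ = v 0 * w 0 + v 1 * w 1 := by
  simp [PiLp.inner_apply, Fin.sum_univ_two, mul_comm]

theorem norm_sq_eq_coord (v : E2) : ‖v‖ ^ 2 = v 0 ^ 2 + v 1 ^ 2 := by
  rw [EuclideanSpace.real_norm_sq_eq, Fin.sum_univ_two]

theorem ext_coord {v w : E2} (h0 : v 0 = w 0) (h1 : v 1 = w 1) : v = w :=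
  PiLp.ext (Fin.forall_fin_two.2 ⟨h0, h1⟩)

theorem inner_unitVec (α β : ℝ) : ⟪unitVec α, unitVec β⟫ = cos (α - β) := by
  rw [inner_eq_coord, cos_sub]
  rfl

@[simp]
theorem norm_unitVec (θ : ℝ) : ‖unitVec θ‖ = 1 := by
  rw [← sq_eq_sq₀ (norm_nonneg _) zero_le_one, ← real_inner_self_eq_norm_sq, inner_unitVec]
  simp

theorem unitVec_add_pi (θ : ℝ) : unitVec (θ + π) = -unitVec θ :=
  ext_coord (cos_add_pi θ) (sin_add_pi θ)

theorem unitVec_sub_unitVec (α β : ℝ) :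
    unitVec α - unitVec β = (2 * sin ((α - β) / 2)) • unitVec ((α + β) / 2 + π / 2) := by
  apply ext_coord
  · simp only [PiLp.sub_apply, PiLp.smul_apply, unitVec_apply_zero, cos_add_pi_div_two,
      smul_eq_mul, cos_sub_cos]
    ring
  · simp only [PiLp.sub_apply, PiLp.smul_apply, unitVec_apply_one, sin_add_pi_div_two,
      smul_eq_mul, sin_sub_sin]

theorem norm_unitVec_sub_unitVec (α β : ℝ) :
    ‖unitVec α - unitVec β‖ = 2 * |sin ((β - α) / 2)| := by
  rw [norm_sub_rev, unitVec_sub_unitVec, norm_smul, norm_unitVec, mul_one, norm_mul]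
  simp

theorem exists_eq_norm_smul_unitVec (v : E2) : ∃ θ ∈ Set.Ioc (-π) π, v = ‖v‖ • unitVec θ := by
  set w : ℂ := ⟨v 0, v 1⟩
  have hnorm : ‖w‖ = ‖v‖ := by
    rw [← sq_eq_sq₀ (norm_nonneg _) (norm_nonneg _), norm_sq_eq_coord, Complex.sq_norm,
      Complex.normSq_apply, sq, sq]
  refine ⟨w.arg, w.arg_mem_Ioc, ext_coord ?_ ?_⟩
  · simp only [PiLp.smul_apply, unitVec_apply_zero, smul_eq_mul, ← hnorm,
      Complex.norm_mul_cos_arg, w]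
  · simp only [PiLp.smul_apply, unitVec_apply_one, smul_eq_mul, ← hnorm,
      Complex.norm_mul_sin_arg, w]

theorem exists_abs_inner_eq_abs_inner_unitVec (v : E2) :
    ∃ θ ∈ Set.Icc 0 π, ∀ u, |⟪v, u⟫| = |⟪‖v‖ • unitVec θ, u⟫| := by
  obtain ⟨θ, ⟨hθ, hθ'⟩, hv⟩ := exists_eq_norm_smul_unitVec v
  rcases le_or_gt 0 θ with h | h
  · exact ⟨θ, ⟨h, hθ'⟩, fun u => by rw [← hv]⟩
  · refine ⟨θ + π, ⟨by linarith, by linarith⟩, fun u => ?_⟩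
    rw [unitVec_add_pi, smul_neg, ← hv, inner_neg_left, abs_neg]

end UnitVector

section Zonogon

variable {E : Type*}

/-- The vertices, for `k = 0, …, m`, of one half of the boundary of the zonogon
`∑ j < m, [-v j, v j]`, when the directions of `v 0, …, v (m - 1)` are sorted by angle within a
half-circle. The other half is obtained by central symmetry. -/
def zonogonVertex [AddCommGroup E] (v : ℕ → E) (m k : ℕ) : E :=
  ∑ j ∈ Finset.range m, if j < k then v j else -v j

theorem zonogonVertex_zero [AddCommGroup E] (v : ℕ → E) (m : ℕ) :
    zonogonVertex v m 0 = -zonogonVertex v m m := by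
  rw [zonogonVertex, zonogonVertex, ← Finset.sum_neg_distrib]
  refine Finset.sum_congr rfl fun j hj => ?_
  rw [if_neg j.not_lt_zero, if_pos (Finset.mem_range.1 hj)]

variable [NormedAddCommGroup E] [InnerProductSpace ℝ E]

theorem zonogonVertex_succ_sub (v : ℕ → E) {m k : ℕ} (hk : k < m) :
    zonogonVertex v m (k + 1) - zonogonVertex v m k = (2 : ℝ) • v k := by
  rw [zonogonVertex, zonogonVertex, ← Finset.sum_sub_distrib, Finset.sum_eq_single_of_mem k
    (Finset.mem_range.2 hk)]
  · simp [two_smul]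
  · intro j _ hj
    have : j < k + 1 ↔ j < k := by omega
    simp only [this, sub_self]

theorem inner_zonogonVertex_le (v : ℕ → E) (m k : ℕ) (u : E) :
    ⟪zonogonVertex v m k, u⟫ ≤ ∑ j ∈ Finset.range m, |⟪v j, u⟫| := by
  rw [zonogonVertex, sum_inner]
  refine Finset.sum_le_sum fun j _ => ?_
  split_ifs
  · exact le_abs_self _
  · rw [inner_neg_left]
    exact neg_le_abs _

theorem inner_zonogonVertex_le_mul_norm {v : ℕ → E} {m : ℕ} {D : ℝ}
    (hD : ∀ u, ∑ j ∈ Finset.range m, |⟪v j, u⟫| ≤ D * ‖u‖) (k : ℕ) (u : E) :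
    ⟪zonogonVertex v m k, u⟫ ≤ D * ‖u‖ :=
  (inner_zonogonVertex_le v m k u).trans (hD u)

theorem sum_inner_sub_by_parts_of_antipodal {m : ℕ} {S n : ℕ → E} (hS : S 0 = -S m)
    (hn : n m = -n 0) :
    ∑ k ∈ Finset.range m, ⟪S (k + 1) - S k, n k⟫ =
      ∑ k ∈ Finset.range m, ⟪S (k + 1), n k - n (k + 1)⟫ := by
  have telescope := Finset.sum_range_sub (fun k => ⟪S k, n k⟫) m
  rw [hS, hn, inner_neg_left, inner_neg_right, sub_self] at telescope
  rw [← sub_eq_zero, ← Finset.sum_sub_distrib, ← telescope]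
  refine Finset.sum_congr rfl fun k _ => ?_
  rw [inner_sub_left, inner_sub_right]
  ring

theorem eq_smul_of_inner_eq {S w : E} {D : ℝ} (hw : w ≠ 0) (hS : ∀ u, ⟪S, u⟫ ≤ D * ‖u‖)
    (h : ⟪S, w⟫ = D * ‖w‖) : S = (D / ‖w‖) • w := by
  have hw' : ‖w‖ ≠ 0 := norm_ne_zero_iff.2 hw
  have hself : ‖S‖ ^ 2 ≤ D * ‖S‖ := real_inner_self_eq_norm_sq S ▸ hS S
  have hdist : ‖S - (D / ‖w‖) • w‖ ^ 2 = ‖S‖ ^ 2 - D ^ 2 := by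
    rw [norm_sub_sq_real, inner_smul_right, h, norm_smul, norm_div, norm_norm, Real.norm_eq_abs,
      div_mul_cancel₀ _ hw', sq_abs]
    field_simp
    ring
  rw [← sub_eq_zero, ← norm_eq_zero, ← sq_eq_zero_iff]
  exact le_antisymm (by linarith [sq_nonneg (D - ‖S‖)]) (sq_nonneg _)

theorem inner_eq_of_inner_sub_eq {S a b : E} {D : ℝ} (hab : a ≠ b) (hnorm : ‖a‖ = ‖b‖)
    (hS : ∀ u, ⟪S, u⟫ ≤ D * ‖u‖) (h : ⟪S, a - b⟫ = D * ‖a - b‖) :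
    ⟪S, a⟫ = D * ‖a - b‖ / 2 := by
  have hne : ‖a - b‖ ≠ 0 := norm_sub_eq_zero_iff.not.2 hab
  have hinner : ⟪a - b, a⟫ = ‖a - b‖ ^ 2 / 2 := by
    rw [norm_sub_sq_real, inner_sub_left, real_inner_self_eq_norm_sq, real_inner_comm, hnorm]
    ring
  rw [eq_smul_of_inner_eq (sub_ne_zero.2 hab) hS h, real_inner_smul_left, hinner]
  field_simp

end Zonogon

theorem sin_pi_div_two_mul_pos {m : ℕ} (hm : 0 < m) : 0 < sin (π / (2 * m)) := by
  have hm' : (1 : ℝ) ≤ m := by exact_mod_cast hm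
  exact sin_pos_of_pos_of_lt_pi (by positivity) (div_lt_self pi_pos (by linarith))

section HalfTurn

/-- `θ 0 ≤ … ≤ θ m` are angles turning from a direction to the opposite one, so that the points
`unitVec (θ k)` are successive points of a half-circle. -/
structure IsHalfTurn (m : ℕ) (θ : ℕ → ℝ) : Prop where
  le_succ : ∀ k < m, θ k ≤ θ (k + 1)
  end_eq : θ m = θ 0 + π

variable {m : ℕ} {θ : ℕ → ℝ}

theorem IsHalfTurn.half_gap_mem_Icc (hθ : IsHalfTurn m θ) :
    ∀ k ∈ Finset.range m, (θ (k + 1) - θ k) / 2 ∈ Set.Icc 0 π := by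
  intro k hk
  have hgap : ∀ j ∈ Finset.range m, 0 ≤ θ (j + 1) - θ j :=
    fun j hj => sub_nonneg.2 (hθ.le_succ j (Finset.mem_range.1 hj))
  have hle := Finset.single_le_sum hgap hk
  rw [Finset.sum_range_sub, hθ.end_eq] at hle
  exact ⟨by linarith [hgap k hk], by linarith [pi_pos]⟩

theorem IsHalfTurn.inv_card_smul_sum_half_gap (hθ : IsHalfTurn m θ) :
    ((Finset.range m).card : ℝ)⁻¹ • ∑ k ∈ Finset.range m, (θ (k + 1) - θ k) / 2 =
      π / (2 * m) := by
  rw [← Finset.sum_div, Finset.sum_range_sub, hθ.end_eq, Finset.card_range, smul_eq_mul,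
    add_sub_cancel_left]
  ring

theorem IsHalfTurn.sum_norm_unitVec_sub (hθ : IsHalfTurn m θ) :
    ∑ k ∈ Finset.range m, ‖unitVec (θ k) - unitVec (θ (k + 1))‖ =
      2 * ∑ k ∈ Finset.range m, sin ((θ (k + 1) - θ k) / 2) := by
  rw [Finset.mul_sum]
  refine Finset.sum_congr rfl fun k hk => ?_
  rw [norm_unitVec_sub_unitVec,
    abs_of_nonneg (sin_nonneg_of_mem_Icc (hθ.half_gap_mem_Icc k hk))]

theorem IsHalfTurn.sum_norm_unitVec_sub_le (hθ : IsHalfTurn m θ) :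
    ∑ k ∈ Finset.range m, ‖unitVec (θ k) - unitVec (θ (k + 1))‖ ≤
      2 * (m * sin (π / (2 * m))) := by
  have jensen := sum_le_card_mul_map_mean_of_concaveOn strictConcaveOn_sin_Icc.concaveOn
    hθ.half_gap_mem_Icc
  rw [hθ.inv_card_smul_sum_half_gap, Finset.card_range] at jensen
  rw [hθ.sum_norm_unitVec_sub]
  exact mul_le_mul_of_nonneg_left jensen zero_le_two

theorem IsHalfTurn.norm_unitVec_sub_eq_of_sum_eq (hθ : IsHalfTurn m θ)
    (h : ∑ k ∈ Finset.range m, ‖unitVec (θ k) - unitVec (θ (k + 1))‖ =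
      2 * (m * sin (π / (2 * m)))) {k : ℕ} (hk : k < m) :
    ‖unitVec (θ k) - unitVec (θ (k + 1))‖ = 2 * sin (π / (2 * m)) := by
  rw [hθ.sum_norm_unitVec_sub] at h
  have hgap : (θ (k + 1) - θ k) / 2 = π / (2 * m) := by
    rw [← hθ.inv_card_smul_sum_half_gap]
    refine eq_mean_of_sum_eq_card_mul_map_mean strictConcaveOn_sin_Icc hθ.half_gap_mem_Icc ?_ k
      (Finset.mem_range.2 hk)
    rw [hθ.inv_card_smul_sum_half_gap, Finset.card_range]
    exact mul_left_cancel₀ two_ne_zero h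
  rw [norm_unitVec_sub_unitVec, hgap,
    abs_of_pos (sin_pi_div_two_mul_pos (k.zero_le.trans_lt hk))]

end HalfTurn

section Reinhardt

section Sorted

variable {m : ℕ} {r θ : ℕ → ℝ} {D : ℝ}

theorem sum_inner_zonogonVertex_eq (hθ : IsHalfTurn m θ) :
    ∑ k ∈ Finset.range m, ⟪zonogonVertex (fun j => r j • unitVec (θ j)) m (k + 1),
      unitVec (θ k) - unitVec (θ (k + 1))⟫ = 2 * ∑ k ∈ Finset.range m, r k := by
  rw [← sum_inner_sub_by_parts_of_antipodal (zonogonVertex_zero _ m)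
    (by rw [hθ.end_eq, unitVec_add_pi]), Finset.mul_sum]
  refine Finset.sum_congr rfl fun k hk => ?_
  rw [zonogonVertex_succ_sub _ (Finset.mem_range.1 hk), inner_smul_left, inner_smul_left,
    inner_unitVec, sub_self, cos_zero, mul_one]
  rfl

theorem two_mul_sum_le_mul_sum_norm (hθ : IsHalfTurn m θ)
    (hD : ∀ u, ∑ j ∈ Finset.range m, |⟪r j • unitVec (θ j), u⟫| ≤ D * ‖u‖) :
    2 * ∑ k ∈ Finset.range m, r k ≤
      D * ∑ k ∈ Finset.range m, ‖unitVec (θ k) - unitVec (θ (k + 1))‖ := by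
  rw [← sum_inner_zonogonVertex_eq hθ, Finset.mul_sum]
  exact Finset.sum_le_sum fun k _ => inner_zonogonVertex_le_mul_norm hD (k + 1) _

theorem sum_radius_le (hD0 : 0 ≤ D) (hθ : IsHalfTurn m θ)
    (hD : ∀ u, ∑ j ∈ Finset.range m, |⟪r j • unitVec (θ j), u⟫| ≤ D * ‖u‖) :
    ∑ k ∈ Finset.range m, r k ≤ D * (m * sin (π / (2 * m))) := by
  have hchords := mul_le_mul_of_nonneg_left hθ.sum_norm_unitVec_sub_le hD0
  linarith [two_mul_sum_le_mul_sum_norm hθ hD]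

theorem norm_unitVec_sub_eq_of_sum_radius_eq (hD0 : 0 < D) (hθ : IsHalfTurn m θ)
    (hD : ∀ u, ∑ j ∈ Finset.range m, |⟪r j • unitVec (θ j), u⟫| ≤ D * ‖u‖)
    (h : ∑ k ∈ Finset.range m, r k = D * (m * sin (π / (2 * m)))) {k : ℕ} (hk : k < m) :
    ‖unitVec (θ k) - unitVec (θ (k + 1))‖ = 2 * sin (π / (2 * m)) := by
  refine hθ.norm_unitVec_sub_eq_of_sum_eq
    (le_antisymm hθ.sum_norm_unitVec_sub_le (le_of_mul_le_mul_left ?_ hD0)) hk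
  linarith [two_mul_sum_le_mul_sum_norm hθ hD]

theorem inner_zonogonVertex_sub_eq_of_sum_radius_eq (hD0 : 0 ≤ D) (hθ : IsHalfTurn m θ)
    (hD : ∀ u, ∑ j ∈ Finset.range m, |⟪r j • unitVec (θ j), u⟫| ≤ D * ‖u‖)
    (h : ∑ k ∈ Finset.range m, r k = D * (m * sin (π / (2 * m)))) {k : ℕ} (hk : k < m) :
    ⟪zonogonVertex (fun j => r j • unitVec (θ j)) m (k + 1),
      unitVec (θ k) - unitVec (θ (k + 1))⟫ = D * ‖unitVec (θ k) - unitVec (θ (k + 1))‖ := by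
  have hle : ∀ j ∈ Finset.range m, ⟪zonogonVertex (fun j => r j • unitVec (θ j)) m (j + 1),
      unitVec (θ j) - unitVec (θ (j + 1))⟫ ≤ D * ‖unitVec (θ j) - unitVec (θ (j + 1))‖ :=
    fun j _ => inner_zonogonVertex_le_mul_norm hD (j + 1) _
  refine (Finset.sum_eq_sum_iff_of_le hle).1 (le_antisymm (Finset.sum_le_sum hle) ?_) k
    (Finset.mem_range.2 hk)
  rw [← Finset.mul_sum, sum_inner_zonogonVertex_eq hθ, h]
  linarith [mul_le_mul_of_nonneg_left hθ.sum_norm_unitVec_sub_le hD0]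

theorem inner_zonogonVertex_unitVec_of_sum_radius_eq (hD0 : 0 < D) (hθ : IsHalfTurn m θ)
    (hD : ∀ u, ∑ j ∈ Finset.range m, |⟪r j • unitVec (θ j), u⟫| ≤ D * ‖u‖)
    (h : ∑ k ∈ Finset.range m, r k = D * (m * sin (π / (2 * m)))) {k : ℕ} (hk : k < m) :
    ⟪zonogonVertex (fun j => r j • unitVec (θ j)) m (k + 1), unitVec (θ k)⟫ =
        D * sin (π / (2 * m)) ∧
      ⟪zonogonVertex (fun j => r j • unitVec (θ j)) m (k + 1), unitVec (θ (k + 1))⟫ =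
        -(D * sin (π / (2 * m))) := by
  have hchord := norm_unitVec_sub_eq_of_sum_radius_eq hD0 hθ hD h hk
  have htight := inner_zonogonVertex_sub_eq_of_sum_radius_eq hD0.le hθ hD h hk
  have hs := sin_pi_div_two_mul_pos (k.zero_le.trans_lt hk)
  have hne : unitVec (θ k) ≠ unitVec (θ (k + 1)) :=
    norm_sub_eq_zero_iff.not.1 (by rw [hchord]; positivity)
  have hleft := inner_eq_of_inner_sub_eq hne (by simp only [norm_unitVec])
    (inner_zonogonVertex_le_mul_norm hD _) htight
  rw [inner_sub_right] at htight
  rw [hchord] at hleft htight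
  constructor <;> linarith

theorem radius_eq_of_sum_radius_eq (hD0 : 0 < D) (hθ : IsHalfTurn m θ)
    (hD : ∀ u, ∑ j ∈ Finset.range m, |⟪r j • unitVec (θ j), u⟫| ≤ D * ‖u‖)
    (h : ∑ k ∈ Finset.range m, r k = D * (m * sin (π / (2 * m)))) {k : ℕ} (hk : k < m) :
    r k = D * sin (π / (2 * m)) := by
  set V : ℕ → E2 := zonogonVertex (fun j => r j • unitVec (θ j)) m with hV
  have hinner : ∀ {j}, j < m → _ := inner_zonogonVertex_unitVec_of_sum_radius_eq hD0 hθ hD h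
  have hright : ⟪V k, unitVec (θ k)⟫ = -(D * sin (π / (2 * m))) := by
    rcases k with _ | k
    · obtain ⟨l, rfl⟩ := Nat.exists_eq_add_one.2 hk
      rw [← (hinner l.lt_succ_self).2, ← hV, hθ.end_eq, unitVec_add_pi, inner_neg_right,
        ← inner_neg_left, hV, ← zonogonVertex_zero]
    · exact (hinner (k.lt_succ_self.trans hk)).2
  have hedge : ⟪V (k + 1) - V k, unitVec (θ k)⟫ = 2 * r k := by
    rw [zonogonVertex_succ_sub _ hk, real_inner_smul_left, real_inner_smul_left, inner_unitVec,
      sub_self, cos_zero, mul_one]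
  rw [inner_sub_left, (hinner hk).1, hright] at hedge
  linarith

end Sorted

theorem exists_isHalfTurn_of_sort {m : ℕ} (hm : 0 < m) (z : Fin m → E2) :
    ∃ (σ : Equiv.Perm (Fin m)) (r θ : ℕ → ℝ), IsHalfTurn m θ ∧ (∀ j : Fin m, r j = ‖z (σ j)‖) ∧
      ∀ u, ∑ j ∈ Finset.range m, |⟪r j • unitVec (θ j), u⟫| = ∑ j, |⟪z j, u⟫| := by
  choose t ht htz using fun j => exists_abs_inner_eq_abs_inner_unitVec (z j)
  set σ := Tuple.sort t
  set θ : ℕ → ℝ := fun k => if h : k < m then t (σ ⟨k, h⟩) else t (σ ⟨0, hm⟩) + π with hθ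
  have hsort : Monotone (t ∘ σ) := Tuple.monotone_sort t
  refine ⟨σ, fun k => if h : k < m then ‖z (σ ⟨k, h⟩)‖ else 0, θ, ⟨fun k hk => ?_, ?_⟩,
    fun j => by simp, fun u => ?_⟩
  · simp only [hθ, dif_pos hk]
    split_ifs with hk'
    · exact hsort (Fin.mk_le_mk.2 k.le_succ)
    · linarith [(ht (σ ⟨k, hk⟩)).2, (ht (σ ⟨0, hm⟩)).1]
  · simp only [hθ, dif_neg (lt_irrefl m), dif_pos hm]
  · rw [Finset.sum_range, ← Equiv.sum_comp σ fun j => |⟪z j, u⟫|]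
    simp only [hθ, Fin.is_lt, dif_pos, Fin.eta, htz]

theorem nonneg_of_sum_abs_inner_le {ι : Type*} [Fintype ι] {z : ι → E2} {D : ℝ}
    (hD : ∀ u, ∑ j, |⟪z j, u⟫| ≤ D * ‖u‖) : 0 ≤ D := by
  have h := hD (unitVec 0)
  rw [norm_unitVec, mul_one] at h
  exact (Finset.sum_nonneg fun j _ => abs_nonneg _).trans h

variable {m : ℕ} {z : Fin m → E2} {D : ℝ}

theorem sum_norm_le_of_sum_abs_inner_le (hD : ∀ u, ∑ j, |⟪z j, u⟫| ≤ D * ‖u‖) :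
    ∑ j, ‖z j‖ ≤ D * (m * sin (π / (2 * m))) := by
  rcases m.eq_zero_or_pos with rfl | hm
  · simp
  obtain ⟨σ, r, θ, hθ, hr, hwidth⟩ := exists_isHalfTurn_of_sort hm z
  have hD' := fun u => (hwidth u).trans_le (hD u)
  have hsum : ∑ j ∈ Finset.range m, r j = ∑ j, ‖z j‖ := by
    simp only [Finset.sum_range, hr, Equiv.sum_comp σ fun j => ‖z j‖]
  exact hsum ▸ sum_radius_le (nonneg_of_sum_abs_inner_le hD) hθ hD'

theorem norm_eq_of_sum_norm_eq (hD : ∀ u, ∑ j, |⟪z j, u⟫| ≤ D * ‖u‖)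
    (h : ∑ j, ‖z j‖ = D * (m * sin (π / (2 * m)))) (j : Fin m) :
    ‖z j‖ = D * sin (π / (2 * m)) := by
  rcases (nonneg_of_sum_abs_inner_le hD).eq_or_lt with rfl | hD0
  · rw [zero_mul] at h ⊢
    exact (Finset.sum_eq_zero_iff_of_nonneg fun _ _ => norm_nonneg _).1 h j (Finset.mem_univ j)
  obtain ⟨σ, r, θ, hθ, hr, hwidth⟩ := exists_isHalfTurn_of_sort j.pos z
  have hD' := fun u => (hwidth u).trans_le (hD u)
  have hsum : ∑ j ∈ Finset.range m, r j = ∑ j, ‖z j‖ := by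
    simp only [Finset.sum_range, hr, Equiv.sum_comp σ fun j => ‖z j‖]
  have hj := radius_eq_of_sum_radius_eq hD0 hθ hD' (hsum.trans h) (σ.symm j).isLt
  rwa [hr, Equiv.apply_symm_apply] at hj

end Reinhardt

section BalancedDirections

theorem integral_abs_cos_period (x : ℝ) : ∫ t in x..x + π, |cos t| = 2 := by
  have hper : Function.Periodic (fun t => |cos t|) π := fun t => by
    simp only [cos_add_pi, abs_neg]
  rw [hper.intervalIntegral_add_eq x (-(π / 2)), show -(π / 2) + π = π / 2 by ring,
    intervalIntegral.integral_congr (g := cos), integral_cos]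
  · rw [sin_neg, sin_pi_div_two]
    norm_num
  · intro t ht
    rw [Set.uIcc_of_le (by linarith [pi_pos])] at ht
    exact abs_of_nonneg (cos_nonneg_of_mem_Icc ht)

theorem abs_cos_mul_two_mul_sin_le_integral (x : ℝ) {δ : ℝ} (hδ : 0 ≤ δ) :
    |cos x| * (2 * sin δ) ≤ ∫ t in (x - δ)..(x + δ), |cos t| := by
  have hcos : ∫ t in (x - δ)..(x + δ), cos t = cos x * (2 * sin δ) := by
    rw [integral_cos, sin_add, sin_sub]
    ring
  calc |cos x| * (2 * sin δ) ≤ |cos x * (2 * sin δ)| := by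
        rw [abs_mul]
        exact mul_le_mul_of_nonneg_left (le_abs_self _) (abs_nonneg _)
    _ ≤ ∫ t in (x - δ)..(x + δ), |cos t| :=
        hcos ▸ intervalIntegral.abs_integral_le_integral_abs (by linarith)

theorem sum_abs_cos_add_mul_sin_le {m : ℕ} (x : ℝ) :
    (∑ j ∈ Finset.range m, |cos (x + j * (π / m))|) * sin (π / (2 * m)) ≤ 1 := by
  rcases m.eq_zero_or_pos with rfl | hm
  · simp
  have hm' : (m : ℝ) ≠ 0 := by exact_mod_cast hm.ne'
  set c : ℕ → ℝ := fun j => x - π / (2 * m) + j * (π / m) with hc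
  have hterm : ∀ j ∈ Finset.range m, |cos (x + j * (π / m))| * (2 * sin (π / (2 * m))) ≤
      ∫ t in c j..c (j + 1), |cos t| := fun j _ => by
    have hleft : c j = x + j * (π / m) - π / (2 * m) := by simp only [hc]; ring
    have hright : c (j + 1) = x + j * (π / m) + π / (2 * m) := by
      simp only [hc]; push_cast; field_simp; ring
    rw [hleft, hright]
    exact abs_cos_mul_two_mul_sin_le_integral _ (by positivity)
  have hsum := Finset.sum_le_sum hterm
  have hperiod : c m = c 0 + π := by simp only [hc]; push_cast; field_simp; ring
  rw [intervalIntegral.sum_integral_adjacent_intervals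
    fun k _ => (continuous_cos.abs).intervalIntegrable _ _, hperiod, integral_abs_cos_period,
    ← Finset.sum_mul] at hsum
  linarith

theorem sum_unitVec_add_mul_eq_zero {p : ℕ} {δ : ℝ} {k : ℤ} (hδ : sin (δ / 2) ≠ 0)
    (hp : p * δ = k * (2 * π)) (x : ℝ) : ∑ j ∈ Finset.range p, unitVec (x + j * δ) = 0 := by
  set n : ℕ → E2 := fun j => unitVec (x - π / 2 - δ / 2 + j * δ) with hn
  have hstep : ∀ j ∈ Finset.range p, n (j + 1) - n j = (2 * sin (δ / 2)) • unitVec (x + j * δ) :=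
    fun j _ => by
      simp only [hn, unitVec_sub_unitVec]
      push_cast
      rw [show (x - π / 2 - δ / 2 + (j + 1) * δ - (x - π / 2 - δ / 2 + j * δ)) / 2 = δ / 2 by ring,
        show (x - π / 2 - δ / 2 + (j + 1) * δ + (x - π / 2 - δ / 2 + j * δ)) / 2 + π / 2 =
          x + j * δ by ring]
  have hclosed : n p = n 0 := by
    simp only [hn, hp, Nat.cast_zero, zero_mul, add_zero, unitVec, cos_add_int_mul_two_pi,
      sin_add_int_mul_two_pi]
  have htelescope := Finset.sum_range_sub n p
  rw [Finset.sum_congr rfl hstep, ← Finset.smul_sum, hclosed, sub_self] at htelescope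
  exact (smul_eq_zero.1 htelescope).resolve_left (mul_ne_zero two_ne_zero hδ)

theorem sin_half_pi_div_add_pi_ne_zero {p : ℕ} (hp : 1 < p) : sin ((π / p + π) / 2) ≠ 0 := by
  have hp' : (1 : ℝ) < p := by exact_mod_cast hp
  have hlt : π / p < π := div_lt_self pi_pos hp'
  have hpos : 0 < π / p := by positivity
  exact (sin_pos_of_pos_of_lt_pi (by linarith) (by linarith)).ne'

/-- The angles `j π / m` of the harmonic half-circle, `j < m`, with every other block of `q`
consecutive directions reversed. When `m = p q` with `p` odd, the resulting unit vectors split into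
`q` regular `p`-gons. -/
def balancedAngle (m q j : ℕ) : ℝ := j * (π / m) + (j / q : ℕ) * π

theorem sum_unitVec_balancedAngle {p q : ℕ} (hp : Odd p) (hp1 : 1 < p) (hq : 0 < q) :
    ∑ j : Fin (p * q), unitVec (balancedAngle (p * q) q j) = 0 := by
  have hp0 : (p : ℝ) ≠ 0 := by exact_mod_cast (by omega : p ≠ 0)
  have hq0 : (q : ℝ) ≠ 0 := by exact_mod_cast hq.ne'
  have hangle : ∀ (t : Fin p) (i : Fin q), balancedAngle (p * q) q (finProdFinEquiv (t, i)) =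
      i * (π / (p * q)) + t * (π / p + π) := fun t i => by
    rw [balancedAngle, finProdFinEquiv_apply_val, Nat.add_mul_div_left _ _ hq,
      Nat.div_eq_of_lt i.isLt]
    push_cast
    field_simp
    ring
  obtain ⟨k, hk⟩ := hp
  have hturn : (p : ℝ) * (π / p + π) = ((k + 1 : ℕ) : ℤ) * (2 * π) := by
    rw [mul_add, mul_div_cancel₀ _ hp0, hk]
    push_cast
    ring
  rw [← Equiv.sum_comp finProdFinEquiv, Fintype.sum_prod_type_right]
  refine Finset.sum_eq_zero fun i _ => ?_
  simp only [hangle]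
  rw [← Finset.sum_range fun t => unitVec (i * (π / (p * q)) + t * (π / p + π))]
  exact sum_unitVec_add_mul_eq_zero (sin_half_pi_div_add_pi_ne_zero hp1) hturn _

theorem sum_abs_inner_unitVec_balancedAngle_le {m : ℕ} (hm : 0 < m) (q : ℕ) (u : E2) :
    ∑ j : Fin m, |⟪unitVec (balancedAngle m q j), u⟫| ≤ 1 / sin (π / (2 * m)) * ‖u‖ := by
  obtain ⟨x, -, hu⟩ := exists_eq_norm_smul_unitVec u
  have hterm : ∀ j : Fin m, |⟪unitVec (balancedAngle m q j), u⟫| =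
      ‖u‖ * |cos (-x + j * (π / m))| := fun j => by
    rw [hu, inner_smul_right, inner_unitVec, norm_smul, norm_unitVec, norm_norm, mul_one,
      abs_mul, abs_norm, balancedAngle, show ((j : ℕ) * (π / m) + ((j : ℕ) / q : ℕ) * π - x : ℝ) =
        -x + (j : ℕ) * (π / m) + ((j : ℕ) / q : ℕ) * π by ring, cos_add_nat_mul_pi, abs_mul,
      abs_neg_one_pow, one_mul]
  have hs := sin_pi_div_two_mul_pos hm
  simp only [hterm]
  rw [← Finset.mul_sum, mul_comm]
  refine mul_le_mul_of_nonneg_right ?_ (norm_nonneg u)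
  rw [le_div_iff₀ hs, ← Finset.sum_range fun j : ℕ => |cos (-x + j * (π / m))|]
  exact sum_abs_cos_add_mul_sin_le _

end BalancedDirections

theorem two_mul_min_eq {R : Type*} [CommRing R] [LinearOrder R] [IsOrderedRing R] (s t : R) :
    2 * min s t = s + t - |s - t| := by
  rw [abs_sub_comm, ← two_nsmul_inf_eq_add_sub_abs_sub, two_nsmul, two_mul]

theorem sq_abs_sub_abs {R : Type*} [CommRing R] [LinearOrder R] [IsStrictOrderedRing R] (s t : R) :
    (|s| - |t|) ^ 2 = min ((s - t) ^ 2) ((s + t) ^ 2) := by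
  have hdiff : |(s - t) ^ 2 - (s + t) ^ 2| = 4 * (|s| * |t|) := by
    rw [show (s - t) ^ 2 - (s + t) ^ 2 = -(4 * (s * t)) by ring, abs_neg, abs_mul, abs_mul,
      abs_of_pos four_pos]
  have hmin := two_mul_min_eq ((s - t) ^ 2) ((s + t) ^ 2)
  rw [hdiff] at hmin
  rw [sub_sq, sq_abs, sq_abs]
  linarith

section ComplexSquare

theorem csq_apply_zero (v : E2) : csq v 0 = v 0 ^ 2 - v 1 ^ 2 := rfl

theorem csq_apply_one (v : E2) : csq v 1 = 2 * v 0 * v 1 := rfl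

theorem csq_unitVec (θ : ℝ) : csq (unitVec θ) = unitVec (2 * θ) :=
  ext_coord (cos_two_mul' θ).symm <| by
    rw [unitVec_apply_one, sin_two_mul, csq_apply_one, unitVec_apply_zero, unitVec_apply_one]
    ring

theorem norm_csq (v : E2) : ‖csq v‖ = ‖v‖ ^ 2 := by
  rw [← sq_eq_sq₀ (norm_nonneg _) (sq_nonneg _), norm_sq_eq_coord, norm_sq_eq_coord,
    csq_apply_zero, csq_apply_one]
  ring

theorem two_mul_inner_sq (v w : E2) : 2 * ⟪v, w⟫ ^ 2 = ‖v‖ ^ 2 * ‖w‖ ^ 2 + ⟪csq v, csq w⟫ := by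
  simp only [inner_eq_coord, norm_sq_eq_coord, csq_apply_zero, csq_apply_one]
  ring

theorem vecMulVec_toFun2 (v : E2) : Matrix.vecMulVec (toFun2 v) (toFun2 v) =
    (1 / 2 : ℝ) • (‖v‖ ^ 2 • 1 + !![csq v 0, csq v 1; csq v 1, -csq v 0]) := by
  ext i k
  fin_cases i <;> fin_cases k
  · change v 0 * v 0 = 1 / 2 * (‖v‖ ^ 2 * 1 + (v 0 ^ 2 - v 1 ^ 2))
    rw [norm_sq_eq_coord]
    ring
  · change v 0 * v 1 = 1 / 2 * (‖v‖ ^ 2 * 0 + 2 * v 0 * v 1)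
    ring
  · change v 1 * v 0 = 1 / 2 * (‖v‖ ^ 2 * 0 + 2 * v 0 * v 1)
    ring
  · change v 1 * v 1 = 1 / 2 * (‖v‖ ^ 2 * 1 + -(v 0 ^ 2 - v 1 ^ 2))
    rw [norm_sq_eq_coord]
    ring

variable {ι : Type*} [Fintype ι]

theorem two_mul_sum_inner_sq (a : ι → E2) (v : E2) :
    2 * ∑ j, ⟪a j, v⟫ ^ 2 = (∑ j, ‖a j‖ ^ 2) * ‖v‖ ^ 2 + ⟪∑ j, csq (a j), csq v⟫ := by
  simp only [Finset.mul_sum, two_mul_inner_sq, Finset.sum_add_distrib, Finset.sum_mul, sum_inner]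

theorem four_mul_sum_min_inner_sq (a : ι → E2) {p q : E2} (h : ‖p‖ = ‖q‖) :
    4 * ∑ j, min (⟪a j, p⟫ ^ 2) (⟪a j, q⟫ ^ 2) =
      2 * (∑ j, ‖a j‖ ^ 2) * ‖q‖ ^ 2 + ⟪∑ j, csq (a j), csq p + csq q⟫ -
        ∑ j, |⟪csq (a j), csq p - csq q⟫| := by
  simp only [Finset.mul_sum, Finset.sum_mul, sum_inner, ← Finset.sum_add_distrib,
    ← Finset.sum_sub_distrib]
  refine Finset.sum_congr rfl fun j _ => ?_
  have hdiff : ⟪csq (a j), csq p - csq q⟫ = 2 * (⟪a j, p⟫ ^ 2 - ⟪a j, q⟫ ^ 2) := by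
    rw [mul_sub, two_mul_inner_sq, two_mul_inner_sq, h, inner_sub_right]
    ring
  have hsum : ⟪csq (a j), csq p + csq q⟫ =
      2 * ⟪a j, p⟫ ^ 2 + 2 * ⟪a j, q⟫ ^ 2 - 2 * ‖a j‖ ^ 2 * ‖q‖ ^ 2 := by
    rw [two_mul_inner_sq, two_mul_inner_sq, h, inner_add_right]
    ring
  rw [hdiff, hsum, abs_mul, abs_two]
  linarith [two_mul_min_eq (⟪a j, p⟫ ^ 2) (⟪a j, q⟫ ^ 2)]

theorem sum_vecMulVec_eq_of_sum_csq_eq_zero {a : ι → E2} (h : ∑ j, csq (a j) = 0) :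
    ∑ j, Matrix.vecMulVec (toFun2 (a j)) (toFun2 (a j)) =
      ((1 / 2) * ∑ j, ‖a j‖ ^ 2) • (1 : Matrix (Fin 2) (Fin 2) ℝ) := by
  have h0 : ∑ j, csq (a j) 0 = 0 := by simpa using congrArg (fun v : E2 => v 0) h
  have h1 : ∑ j, csq (a j) 1 = 0 := by simpa using congrArg (fun v : E2 => v 1) h
  have htraceless : ∑ j, !![csq (a j) 0, csq (a j) 1; csq (a j) 1, -csq (a j) 0] = 0 := by
    ext i k
    fin_cases i <;> fin_cases k <;> simp [Matrix.sum_apply, h0, h1]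
  simp only [vecMulVec_toFun2]
  rw [← Finset.smul_sum, Finset.sum_add_distrib, htraceless, add_zero, ← Finset.sum_smul,
    smul_smul]

end ComplexSquare

section LipschitzConstants

variable {m : ℕ} {a : Fin m → E2}

theorem norm_PhiMap_sub_sq (a : Fin m → E2) (x y : E2) :
    ‖PhiMap a x - PhiMap a y‖ ^ 2 = ∑ j, min (⟪a j, x - y⟫ ^ 2) (⟪a j, x + y⟫ ^ 2) := by
  simp only [EuclideanSpace.real_norm_sq_eq, inner_sub_right, inner_add_right, ← sq_abs_sub_abs]
  rfl

theorem norm_PhiMap_sub_le {K : ℝ} (h : ∀ v, ∑ j, ⟪a j, v⟫ ^ 2 ≤ K * ‖v‖ ^ 2) (x y : E2) :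
    ‖PhiMap a x - PhiMap a y‖ ≤ √K * pdist x y := by
  have hle : ∀ v, (∀ j, min (⟪a j, x - y⟫ ^ 2) (⟪a j, x + y⟫ ^ 2) ≤ ⟪a j, v⟫ ^ 2) →
      ‖PhiMap a x - PhiMap a y‖ ≤ √K * ‖v‖ := fun v hv => by
    rw [← sqrt_sq (norm_nonneg v), ← sqrt_mul' K (sq_nonneg _)]
    refine le_sqrt_of_sq_le ?_
    rw [norm_PhiMap_sub_sq]
    exact (Finset.sum_le_sum fun j _ => hv j).trans (h v)
  rw [pdist, mul_min_of_nonneg _ _ (sqrt_nonneg K)]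
  exact le_min (hle _ fun j => min_le_left _ _) (hle _ fun j => min_le_right _ _)

theorem pdist_nonneg (x y : E2) : 0 ≤ pdist x y := le_min (norm_nonneg _) (norm_nonneg _)

theorem nonneg_of_mem_ratioSet {r : ℝ} (hr : r ∈ ratioSet a) : 0 ≤ r := by
  obtain ⟨x, y, -, rfl⟩ := hr
  exact div_nonneg (norm_nonneg _) (pdist_nonneg x y)

theorem bddAbove_ratioSet (a : Fin m → E2) : BddAbove (ratioSet a) := by
  refine ⟨√(∑ j, ‖a j‖ ^ 2), ?_⟩
  rintro r ⟨x, y, hxy, rfl⟩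
  rw [div_le_iff₀ ((pdist_nonneg x y).lt_of_ne' hxy)]
  refine norm_PhiMap_sub_le (fun v => ?_) x y
  rw [Finset.sum_mul]
  refine Finset.sum_le_sum fun j _ => ?_
  rw [← mul_pow]
  exact sq_le_sq.2 ((abs_real_inner_le_norm _ _).trans (le_abs_self _))

theorem ratioSet_nonempty (a : Fin m → E2) : (ratioSet a).Nonempty :=
  ⟨_, unitVec 0, 0, by simp [pdist], rfl⟩

theorem lipL_nonneg (a : Fin m → E2) : 0 ≤ lipL a :=
  Real.sInf_nonneg fun _ => nonneg_of_mem_ratioSet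

theorem lipU_nonneg (a : Fin m → E2) : 0 ≤ lipU a :=
  Real.sSup_nonneg fun _ => nonneg_of_mem_ratioSet

theorem lipL_mul_pdist_le (a : Fin m → E2) (x y : E2) :
    lipL a * pdist x y ≤ ‖PhiMap a x - PhiMap a y‖ := by
  rcases eq_or_ne (pdist x y) 0 with h | h
  · rw [h, mul_zero]
    exact norm_nonneg _
  · rw [← le_div_iff₀ ((pdist_nonneg x y).lt_of_ne' h)]
    exact csInf_le ⟨0, fun _ => nonneg_of_mem_ratioSet⟩ ⟨x, y, h, rfl⟩

theorem norm_PhiMap_sub_le_lipU_mul_pdist (a : Fin m → E2) {x y : E2} (h : pdist x y ≠ 0) :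
    ‖PhiMap a x - PhiMap a y‖ ≤ lipU a * pdist x y := by
  rw [← div_le_iff₀ ((pdist_nonneg x y).lt_of_ne' h)]
  exact le_csSup (bddAbove_ratioSet a) ⟨x, y, h, rfl⟩

theorem lipL_sq_le_sum_min_inner_sq (a : Fin m → E2) {p q : E2} (hp : ‖p‖ = 1) (hq : ‖q‖ = 1) :
    lipL a ^ 2 ≤ ∑ j, min (⟪a j, p⟫ ^ 2) (⟪a j, q⟫ ^ 2) := by
  have hsub : (2⁻¹ : ℝ) • (p + q) - (2⁻¹ : ℝ) • (q - p) = p := by module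
  have hadd : (2⁻¹ : ℝ) • (p + q) + (2⁻¹ : ℝ) • (q - p) = q := by module
  have hle := lipL_mul_pdist_le a ((2⁻¹ : ℝ) • (p + q)) ((2⁻¹ : ℝ) • (q - p))
  rw [pdist, hsub, hadd, hp, hq, min_self, mul_one] at hle
  have hsq := pow_le_pow_left₀ (lipL_nonneg a) hle 2
  rwa [norm_PhiMap_sub_sq, hsub, hadd] at hsq

theorem sum_inner_sq_le_lipU_sq (a : Fin m → E2) {v : E2} (hv : ‖v‖ = 1) :
    ∑ j, ⟪a j, v⟫ ^ 2 ≤ lipU a ^ 2 := by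
  have hpdist : pdist v 0 = 1 := by rw [pdist, sub_zero, add_zero, hv, min_self]
  have hle := norm_PhiMap_sub_le_lipU_mul_pdist a (hpdist.trans_ne one_ne_zero)
  rw [hpdist, mul_one] at hle
  have hsq := pow_le_pow_left₀ (norm_nonneg _) hle 2
  simpa only [norm_PhiMap_sub_sq, sub_zero, add_zero, min_self] using hsq

theorem le_lipL {c : ℝ} (h : ∀ x y, c * pdist x y ≤ ‖PhiMap a x - PhiMap a y‖) :
    c ≤ lipL a := by
  refine le_csInf (ratioSet_nonempty a) ?_
  rintro r ⟨x, y, hxy, rfl⟩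
  rw [le_div_iff₀ ((pdist_nonneg x y).lt_of_ne' hxy)]
  exact h x y

theorem lipU_le {c : ℝ} (h : ∀ x y, ‖PhiMap a x - PhiMap a y‖ ≤ c * pdist x y) : lipU a ≤ c := by
  refine csSup_le (ratioSet_nonempty a) ?_
  rintro r ⟨x, y, hxy, rfl⟩
  rw [div_le_iff₀ ((pdist_nonneg x y).lt_of_ne' hxy)]
  exact h x y

theorem condNum_le_ofReal_sqrt_iff {c : ℝ} (hc : 0 ≤ c) :
    condNum a ≤ ENNReal.ofReal √c ↔ 0 < lipL a ∧ lipU a ^ 2 ≤ c * lipL a ^ 2 := by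
  rcases (lipL_nonneg a).eq_or_lt' with h | h
  · simp [condNum, h]
  · rw [condNum, if_neg h.ne', ENNReal.ofReal_le_ofReal_iff (sqrt_nonneg c),
      Real.le_sqrt (div_nonneg (lipU_nonneg a) h.le) hc, div_pow,
      div_le_iff₀ (pow_pos h 2), and_iff_right h]

end LipschitzConstants

section FrameBounds

variable {m : ℕ} {a : Fin m → E2} {D : ℝ}

theorem sum_norm_sq_add_norm_sum_csq_le (a : Fin m → E2) :
    ∑ j, ‖a j‖ ^ 2 + ‖∑ j, csq (a j)‖ ≤ 2 * lipU a ^ 2 := by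
  obtain ⟨t, -, ht⟩ := exists_eq_norm_smul_unitVec (∑ j, csq (a j))
  have henergy : 2 * ∑ j, ⟪a j, unitVec (t / 2)⟫ ^ 2 =
      ∑ j, ‖a j‖ ^ 2 + ‖∑ j, csq (a j)‖ := by
    rw [two_mul_sum_inner_sq, csq_unitVec, mul_div_cancel₀ t two_ne_zero, norm_unitVec, one_pow,
      mul_one]
    nth_rw 1 [ht]
    rw [real_inner_smul_left, inner_unitVec, sub_self, cos_zero, mul_one]
  linarith [sum_inner_sq_le_lipU_sq a (norm_unitVec (t / 2))]

theorem sum_abs_inner_csq_unitVec_le (a : Fin m → E2) (t : ℝ) :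
    ∑ j, |⟪csq (a j), unitVec t⟫| ≤ ∑ j, ‖a j‖ ^ 2 - 2 * lipL a ^ 2 := by
  have hp := norm_unitVec (t / 2)
  have hq := norm_unitVec (t / 2 + π / 2)
  have hcp : csq (unitVec (t / 2)) = unitVec t := by
    rw [csq_unitVec, mul_div_cancel₀ t two_ne_zero]
  have hcq : csq (unitVec (t / 2 + π / 2)) = -unitVec t := by
    rw [csq_unitVec, show 2 * (t / 2 + π / 2) = t + π by ring, unitVec_add_pi]
  have henergy := four_mul_sum_min_inner_sq a (hp.trans hq.symm)
  rw [hcp, hcq, hq, add_neg_cancel, inner_zero_right, sub_neg_eq_add, ← two_smul ℝ] at henergy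
  simp only [inner_smul_right, abs_mul, abs_two, ← Finset.mul_sum] at henergy
  linarith [lipL_sq_le_sum_min_inner_sq a hp hq]

theorem sum_abs_inner_csq_le (a : Fin m → E2) (u : E2) :
    ∑ j, |⟪csq (a j), u⟫| ≤ (∑ j, ‖a j‖ ^ 2 - 2 * lipL a ^ 2) * ‖u‖ := by
  obtain ⟨t, -, ht⟩ := exists_eq_norm_smul_unitVec u
  rw [ht]
  simp only [inner_smul_right, abs_mul, abs_norm, norm_smul, norm_norm, norm_unitVec, mul_one,
    ← Finset.mul_sum]
  rw [mul_comm]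
  exact mul_le_mul_of_nonneg_right (sum_abs_inner_csq_unitVec_le a t) (norm_nonneg u)

theorem two_mul_lipU_sq_le_of_sum_csq_eq_zero (hZ : ∑ j, csq (a j) = 0) :
    2 * lipU a ^ 2 ≤ ∑ j, ‖a j‖ ^ 2 := by
  have hle : lipU a ≤ √((∑ j, ‖a j‖ ^ 2) / 2) := lipU_le <| norm_PhiMap_sub_le fun v => by
    have henergy := two_mul_sum_inner_sq a v
    rw [hZ, inner_zero_left] at henergy
    linarith
  rw [Real.le_sqrt (lipU_nonneg a) (by positivity)] at hle
  linarith

theorem sum_norm_sq_sub_le_two_mul_sum_min (hZ : ∑ j, csq (a j) = 0)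
    (hD : ∀ u, ∑ j, |⟪csq (a j), u⟫| ≤ D * ‖u‖) {p q : E2} (hp : ‖p‖ = 1) (hq : ‖q‖ = 1) :
    ∑ j, ‖a j‖ ^ 2 - D ≤ 2 * ∑ j, min (⟪a j, p⟫ ^ 2) (⟪a j, q⟫ ^ 2) := by
  have henergy := four_mul_sum_min_inner_sq a (hp.trans hq.symm)
  rw [hZ, inner_zero_left, hq] at henergy
  have hdist : ‖csq p - csq q‖ ≤ 2 := by
    refine (norm_sub_le _ _).trans ?_
    rw [norm_csq, norm_csq, hp, hq]
    norm_num
  have hwidth := (hD _).trans (mul_le_mul_of_nonneg_left hdist (nonneg_of_sum_abs_inner_le hD))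
  linarith

theorem exists_min_norm_sq_mul_sum_min_le (a : Fin m → E2) (p q : E2) :
    ∃ p' q' : E2, ‖p'‖ = 1 ∧ ‖q'‖ = 1 ∧
      min ‖p‖ ‖q‖ ^ 2 * ∑ j, min (⟪a j, p'⟫ ^ 2) (⟪a j, q'⟫ ^ 2) ≤
        ∑ j, min (⟪a j, p⟫ ^ 2) (⟪a j, q⟫ ^ 2) := by
  obtain ⟨s, -, hs⟩ := exists_eq_norm_smul_unitVec p
  obtain ⟨t, -, ht⟩ := exists_eq_norm_smul_unitVec q
  refine ⟨unitVec s, unitVec t, norm_unitVec s, norm_unitVec t, ?_⟩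
  have hd : 0 ≤ min ‖p‖ ‖q‖ := le_min (norm_nonneg p) (norm_nonneg q)
  have hscale : ∀ (c : ℝ) (v w : E2), min ‖p‖ ‖q‖ ≤ c →
      min ‖p‖ ‖q‖ ^ 2 * ⟪v, w⟫ ^ 2 ≤ ⟪v, c • w⟫ ^ 2 := fun c v w hc => by
    rw [inner_smul_right, mul_pow]
    exact mul_le_mul_of_nonneg_right (pow_le_pow_left₀ hd hc 2) (sq_nonneg _)
  rw [Finset.mul_sum]
  refine Finset.sum_le_sum fun j _ => ?_
  rw [mul_min_of_nonneg _ _ (sq_nonneg _)]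
  refine min_le_min ?_ ?_
  · exact (hscale _ _ _ (min_le_left _ _)).trans_eq (by rw [← hs])
  · exact (hscale _ _ _ (min_le_right _ _)).trans_eq (by rw [← ht])

theorem sum_norm_sq_sub_le_two_mul_lipL_sq (hZ : ∑ j, csq (a j) = 0)
    (hD : ∀ u, ∑ j, |⟪csq (a j), u⟫| ≤ D * ‖u‖) :
    ∑ j, ‖a j‖ ^ 2 - D ≤ 2 * lipL a ^ 2 := by
  have hle : √((∑ j, ‖a j‖ ^ 2 - D) / 2) ≤ lipL a := le_lipL fun x y => by
    obtain ⟨p, q, hp, hq, hpq⟩ := exists_min_norm_sq_mul_sum_min_le a (x - y) (x + y)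
    have hunit := sum_norm_sq_sub_le_two_mul_sum_min hZ hD hp hq
    rw [← sqrt_sq (pdist_nonneg x y), ← sqrt_mul' _ (sq_nonneg _)]
    refine sqrt_le_iff.2 ⟨norm_nonneg _, ?_⟩
    rw [norm_PhiMap_sub_sq, mul_comm]
    exact (mul_le_mul_of_nonneg_left (by linarith) (sq_nonneg _)).trans hpq
  rw [sqrt_le_left (lipL_nonneg a)] at hle
  linarith

theorem condNum_le_of_sum_csq_eq_zero (hZ : ∑ j, csq (a j) = 0)
    (hD : ∀ u, ∑ j, |⟪csq (a j), u⟫| ≤ D * ‖u‖) (hlt : D < ∑ j, ‖a j‖ ^ 2) :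
    condNum a ≤ ENNReal.ofReal √((∑ j, ‖a j‖ ^ 2) / (∑ j, ‖a j‖ ^ 2 - D)) := by
  have hU := two_mul_lipU_sq_le_of_sum_csq_eq_zero hZ
  have hL := sum_norm_sq_sub_le_two_mul_lipL_sq hZ hD
  have hgap := sub_pos.2 hlt
  have hsize : 0 ≤ ∑ j, ‖a j‖ ^ 2 := by positivity
  rw [condNum_le_ofReal_sqrt_iff (div_nonneg hsize hgap.le), div_mul_eq_mul_div,
    le_div_iff₀ hgap]
  refine ⟨(lipL_nonneg a).lt_of_ne' fun h => ?_, ?_⟩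
  · rw [h] at hL
    linarith
  · have hleft := mul_le_mul_of_nonneg_right hU hgap.le
    have hright := mul_le_mul_of_nonneg_left hL hsize
    linarith

end FrameBounds

section MinimalConditionNumber

theorem one_lt_mul_sin_pi_div_two_mul {m : ℕ} (hm : 2 ≤ m) : 1 < m * sin (π / (2 * m)) := by
  have hm' : (2 : ℝ) ≤ m := by exact_mod_cast hm
  have hlt : π / (2 * m) < π / 2 := div_lt_div_of_pos_left pi_pos two_pos (by linarith)
  have hsin := mul_lt_sin (by positivity) hlt
  rw [show 2 / π * (π / (2 * m)) = 1 / m by field_simp, div_lt_iff₀ (by linarith)] at hsin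
  linarith

/-- The square of the least condition number of frames of `m` vectors in the plane, when `m` has an
odd factor. -/
def minCondSq (m : ℕ) : ℝ := m * sin (π / (2 * m)) / (m * sin (π / (2 * m)) - 1)

theorem minCondSq_nonneg {m : ℕ} (hm : 2 ≤ m) : 0 ≤ minCondSq m := by
  have := one_lt_mul_sin_pi_div_two_mul hm
  exact div_nonneg (by linarith) (by linarith)

theorem condNum_unitVec_half_balancedAngle_le {p q : ℕ} (hp : Odd p) (hp1 : 1 < p) (hq : 0 < q) :
    condNum (fun j : Fin (p * q) => unitVec (balancedAngle (p * q) q j / 2)) ≤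
      ENNReal.ofReal √(minCondSq (p * q)) := by
  have hm : 2 ≤ p * q := hp1.trans_le (Nat.le_mul_of_pos_right p hq)
  generalize hM : (fun j : Fin (p * q) => unitVec (balancedAngle (p * q) q j / 2)) = M
  have hcsq : ∀ j, csq (M j) = unitVec (balancedAngle (p * q) q j) := fun j => by
    rw [← hM, csq_unitVec, mul_div_cancel₀ _ two_ne_zero]
  have hsize : ∑ j, ‖M j‖ ^ 2 = (p * q : ℕ) := by simp [← hM]
  have hZ : ∑ j, csq (M j) = 0 := by
    simpa only [hcsq] using sum_unitVec_balancedAngle hp hp1 hq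
  have hD : ∀ u, ∑ j, |⟪csq (M j), u⟫| ≤ 1 / sin (π / (2 * (p * q : ℕ))) * ‖u‖ := fun u => by
    simpa only [hcsq] using sum_abs_inner_unitVec_balancedAngle_le (two_pos.trans_le hm) q u
  have hs := sin_pi_div_two_mul_pos (two_pos.trans_le hm)
  have hlt : 1 / sin (π / (2 * (p * q : ℕ))) < ∑ j, ‖M j‖ ^ 2 := by
    rw [hsize, div_lt_iff₀ hs]
    exact one_lt_mul_sin_pi_div_two_mul hm
  have hcond := condNum_le_of_sum_csq_eq_zero hZ hD hlt
  rwa [hsize, ← mul_div_mul_right _ _ hs.ne', sub_mul, one_div_mul_cancel hs.ne'] at hcond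

variable {m : ℕ} {a : Fin m → E2}

theorem sum_csq_eq_zero_and_norm_eq_of_condNum_le (hm : 2 ≤ m)
    (h : condNum a ≤ ENNReal.ofReal √(minCondSq m)) :
    ∑ j, csq (a j) = 0 ∧ ∀ i j, ‖a i‖ = ‖a j‖ := by
  have hN := one_lt_mul_sin_pi_div_two_mul hm
  have hN' := sub_pos.2 hN
  have hcond := ((condNum_le_ofReal_sqrt_iff (minCondSq_nonneg hm)).1 h).2
  rw [minCondSq, div_mul_eq_mul_div, le_div_iff₀ hN'] at hcond
  have hupper := mul_le_mul_of_nonneg_right (sum_norm_sq_add_norm_sum_csq_le a) hN'.le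
  have hlower := sum_norm_le_of_sum_abs_inner_le (sum_abs_inner_csq_le a)
  simp only [norm_csq] at hlower
  have hZ : ∑ j, csq (a j) = 0 := by
    rw [← norm_le_zero_iff]
    refine le_of_mul_le_mul_right ?_ hN'
    linarith
  have htight := norm_eq_of_sum_norm_eq (sum_abs_inner_csq_le a) <| by
    simp only [norm_csq]
    rw [hZ, norm_zero] at hupper
    linarith
  refine ⟨hZ, fun i j => ?_⟩
  rw [← sq_eq_sq₀ (norm_nonneg _) (norm_nonneg _), ← norm_csq, ← norm_csq, htight, htight]

end MinimalConditionNumber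

/-- If `m ≥ 3` has an odd factor and `A = [a_1,…,a_m]ᵀ ∈ ℝ^{m×2}` attains
the minimal condition number, then its rows form a tight frame
`∑ a_j a_jᵀ = ((1/2)·∑ ‖a_j‖²)·I₂` and all rows have equal norm. -/
theorem stmt15 {m : ℕ} (hm : 3 ≤ m) (hodd : ∃ k, Odd k ∧ 1 < k ∧ k ∣ m)
    (a : Fin m → E2) (hopt : condNum a = ⨅ M : Fin m → E2, condNum M) :
    (∑ j, Matrix.vecMulVec (toFun2 (a j)) (toFun2 (a j)) =
        ((1 / 2) * ∑ j, ‖a j‖ ^ 2) • (1 : Matrix (Fin 2) (Fin 2) ℝ)) ∧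
    ∀ i j : Fin m, ‖a i‖ = ‖a j‖ := by
  obtain ⟨p, hp, hp1, q, rfl⟩ := hodd
  have hq : 0 < q := Nat.pos_of_ne_zero (by rintro rfl; omega)
  have hcond : condNum a ≤ ENNReal.ofReal √(minCondSq (p * q)) :=
    hopt.trans_le ((iInf_le _ _).trans (condNum_unitVec_half_balancedAngle_le hp hp1 hq))
  obtain ⟨hZ, hnorm⟩ := sum_csq_eq_zero_and_norm_eq_of_condNum_le (by omega) hcond
  exact ⟨sum_vecMulVec_eq_of_sum_csq_eq_zero hZ, hnorm⟩
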